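/- Let u : ℕ → ℕ be a sequence with u(n) → ∞ as n → ∞. Let R = ∏_{p prime} ℤ_p, and for each n let A be a random n×(n+u(n)) matrix over R whose entries are independent and identically distributed according to the Haar probability measure on R. Then lim_{n→∞} P(A : R^(n+u(n)) → R^n is surjective) = 1. -/

import Mathlib

/-!
Surjectivity of a matrix `A` over a product of local rings can be tested over each residue field.
Over the residue field with `q` elements, `A` fails to be surjective exactly when `w A = 0` for some
nonzero row vector `w`. If `A` has size `n × (n + k)`, then for fixed `w` the reduction of `w A` is
uniform on a space with `q ^ (n + k)` elements, because its law is the image of an invariant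
probability measure under a surjective homomorphism. A union bound over the at most `q ^ n` vectors
`w` bounds the probability of failure at this factor by `q ^ (-k)`, uniformly in `n`. Summing over
the primes gives `∑ p ^ (-k)`, which tends to `0` as `k → ∞`.
-/

open MeasureTheory Filter

instance (p : Nat.Primes) : Fact (Nat.Prime (p : ℕ)) := ⟨p.2⟩

noncomputable instance (p : ℕ) [Fact p.Prime] : MeasurableSpace ℤ_[p] := borel _

instance (p : ℕ) [Fact p.Prime] : BorelSpace ℤ_[p] := ⟨rfl⟩

/-- The product of the rings of `p`-adic integers over all primes `p`
(isomorphic to the profinite completion of `ℤ`). -/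
abbrev Zhat : Type := ∀ p : Nat.Primes, ℤ_[(p : ℕ)]

open Function IsLocalRing Topology
open scoped ENNReal Matrix

section Surjectivity

variable {m n : Type*} [Fintype n]

theorem mulVec_surjective_of_vecMul_injective {K : Type*} [Field K] [Fintype m] {A : Matrix m n K}
    (hA : Injective A.vecMul) : Surjective A.mulVec := by
  have hrank : A.rank = Fintype.card m := (Matrix.vecMul_injective_iff.1 hA).rank_matrix
  have hrange : A.mulVecLin.range = ⊤ :=
    Submodule.eq_top_of_finrank_eq (hrank.trans (Module.finrank_fintype_fun_eq_card K).symm)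
  exact LinearMap.range_eq_top.1 hrange

theorem exists_ne_zero_vecMul_eq_zero {K : Type*} [Field K] [Fintype m] {A : Matrix m n K}
    (hA : ¬ Surjective A.mulVec) : ∃ w ≠ 0, w ᵥ* A = 0 := by
  contrapose! hA
  refine mulVec_surjective_of_vecMul_injective ((injective_iff_map_eq_zero A.vecMulLinear).2 ?_)
  exact fun w hw => not_imp_not.1 (hA w) hw

theorem matrix_map_surjective {m n R S : Type*} {f : R → S} (hf : Surjective f) :
    Surjective fun A : Matrix m n R => A.map f :=
  hf.comp_left.comp_left

theorem mulVec_surjective_map_iff {R S : Type*} [CommRing R] [CommRing S] (f : R →+* S)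
    [IsLocalHom f] (hf : Surjective f) [Finite m] {A : Matrix m n R} :
    Surjective (A.map f).mulVec ↔ Surjective A.mulVec := by
  classical
  have := Fintype.ofFinite m
  simp only [Matrix.mulVec_surjective_iff_exists_right_inverse]
  constructor
  · rintro ⟨B', hB'⟩
    obtain ⟨B, rfl⟩ := matrix_map_surjective hf B'
    have hdet : IsUnit (A * B).det := by
      refine isUnit_of_map_unit f _ ?_
      rw [RingHom.map_det, RingHom.mapMatrix_apply, Matrix.map_mul, hB', Matrix.det_one]
      exact isUnit_one
    exact ⟨B * (A * B)⁻¹, by rw [← Matrix.mul_assoc, Matrix.mul_nonsing_inv _ hdet]⟩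
  · rintro ⟨B, hB⟩
    exact ⟨B.map f, by rw [← Matrix.map_mul, hB, Matrix.map_one _ f.map_zero f.map_one]⟩

theorem mulVec_surjective_pi_iff {ι : Type*} {R : ι → Type*} [∀ i, NonAssocSemiring (R i)]
    {A : Matrix m n (∀ i, R i)} :
    Surjective A.mulVec ↔ ∀ i, Surjective (A.map (Pi.evalRingHom R i)).mulVec := by
  have heval (i : ι) (x : n → ∀ i, R i) (a : m) :
      (A *ᵥ x) a i = (A.map (Pi.evalRingHom R i) *ᵥ fun b => x b i) a :=
    RingHom.map_mulVec (Pi.evalRingHom R i) A x a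
  constructor
  · intro h i y
    choose z hz using fun a => surjective_eval (β := R) i (y a)
    obtain ⟨x, hx⟩ := h z
    exact ⟨fun b => x b i, funext fun a => by rw [← heval, hx, ← hz a]⟩
  · intro h y
    choose x hx using fun i => h i fun a => y a i
    exact ⟨fun b i => x i b, by ext a i; rw [heval, hx]⟩

end Surjectivity

section RandomMatrix

variable {m n R K : Type*} [Fintype m]

theorem measurable_of_measurableSet_ker {G F : Type*} [AddGroup G] [MeasurableSpace G]
    [MeasurableAdd G] [AddGroup F] [Countable F] [MeasurableSpace F] (φ : G →+ F)
    (hφ : MeasurableSet (φ.ker : Set G)) : Measurable φ := by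
  refine measurable_to_countable fun x => ?_
  have hcoset : φ ⁻¹' {φ x} = (-x + ·) ⁻¹' φ.ker := by
    ext y
    simp only [Set.mem_preimage, Set.mem_singleton_iff, SetLike.mem_coe, AddMonoidHom.mem_ker,
      map_add, map_neg, neg_add_eq_zero]
    exact eq_comm
  exact hcoset ▸ measurable_const_add (-x) hφ

theorem measure_ker_eq_inv_card {G F : Type*} [AddGroup G] [MeasurableSpace G] [MeasurableAdd G]
    [AddGroup F] [Finite F] (μ : Measure G) [IsProbabilityMeasure μ] [μ.IsAddLeftInvariant]
    (φ : G →+ F) (hφ : Surjective φ) (hker : MeasurableSet (φ.ker : Set G)) :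
    μ φ.ker = (Nat.card F : ℝ≥0∞)⁻¹ := by
  have hindex : φ.ker.index = Nat.card F := by
    rw [AddSubgroup.index_ker, AddMonoidHom.range_eq_top.2 hφ, AddSubgroup.card_top]
  have : φ.ker.FiniteIndex := ⟨hindex ▸ Nat.card_pos.ne'⟩
  refine ENNReal.eq_inv_of_mul_eq_one_left ?_
  rw [mul_comm, ← hindex, AddSubgroup.index_mul_measure _ hker, measure_univ]

/-- The law of a random `m × n` matrix whose entries are independent with common law `μ`. -/
noncomputable abbrev iidMatrixLaw (m n : Type*) [Fintype m] [Fintype n] [MeasurableSpace R]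
    (μ : Measure R) : Measure (m → n → R) :=
  Measure.pi fun _ => Measure.pi fun _ => μ

instance [AddGroup R] [MeasurableSpace R] [MeasurableAdd R] [Fintype n]
    (μ : Measure R) [SigmaFinite μ] [μ.IsAddLeftInvariant] :
    (iidMatrixLaw m n μ).IsAddLeftInvariant :=
  have : (Measure.pi fun _ : n => μ).IsAddLeftInvariant := Measure.pi.isAddLeftInvariant _
  Measure.pi.isAddLeftInvariant _

/-- The additive map `A ↦ w f(A)`, whose kernel consists of the matrices `A` for which `w` witnesses
that the entrywise image `f(A)` is not surjective. -/
def vecMulMap [NonAssocSemiring R] [NonAssocSemiring K] (f : R →+* K) (w : m → K) :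
    (m → n → R) →+ (n → K) where
  toFun A := w ᵥ* (Matrix.of A).map f
  map_zero' := by ext; simp [Matrix.vecMul, dotProduct]
  map_add' A B := by ext; simp [Matrix.vecMul, dotProduct, mul_add, Finset.sum_add_distrib]

variable [Ring R] [Field K] (f : R →+* K)

theorem vecMulMap_surjective (hf : Surjective f) {w : m → K} (hw : w ≠ 0) :
    Surjective (vecMulMap (n := n) f w) := by
  classical
  intro y
  obtain ⟨i, hi⟩ : ∃ i, w i ≠ 0 := Function.ne_iff.1 hw
  obtain ⟨A, hA : A.map f = _⟩ :=
    matrix_map_surjective hf (Matrix.vecMulVec (Pi.single i (w i)⁻¹) y)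
  refine ⟨A, ?_⟩
  change w ᵥ* A.map f = y
  rw [hA, Matrix.vecMul_vecMulVec, dotProduct_single, mul_inv_cancel₀ hi]
  simp

variable [MeasurableSpace R] [Finite K]

theorem measurable_vecMulMap [Finite n] [MeasurableSpace K] [MeasurableSingletonClass K]
    (hf : Measurable f) (w : m → K) : Measurable (vecMulMap (n := n) f w) := by
  have hmap : Measurable fun (A : m → n → R) i j => f (A i j) := by fun_prop
  exact (measurable_of_finite fun B : m → n → K => w ᵥ* Matrix.of B).comp hmap

variable [Fintype n] [MeasurableAdd R]
variable (μ : Measure R) [IsProbabilityMeasure μ] [μ.IsAddLeftInvariant]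

theorem iidMatrixLaw_vecMul_map_eq_zero (hf : Surjective f)
    (hker : MeasurableSet (RingHom.ker f : Set R)) {w : m → K} (hw : w ≠ 0) :
    iidMatrixLaw m n μ {A | w ᵥ* (Matrix.of A).map f = 0} =
      ((Nat.card K : ℝ≥0∞) ^ Fintype.card n)⁻¹ := by
  let _ : MeasurableSpace K := ⊤
  have hfm : Measurable f := measurable_of_measurableSet_ker f.toAddMonoidHom hker
  have hker' : MeasurableSet ((vecMulMap (n := n) f w).ker : Set (m → n → R)) :=
    measurable_vecMulMap f hfm w (measurableSet_singleton 0)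
  have hcard := measure_ker_eq_inv_card (iidMatrixLaw m n μ) _ (vecMulMap_surjective f hf hw) hker'
  rw [Nat.card_fun, Nat.card_eq_fintype_card (α := n), Nat.cast_pow] at hcard
  exact hcard

theorem iidMatrixLaw_not_surjective_map_le (hf : Surjective f)
    (hker : MeasurableSet (RingHom.ker f : Set R)) :
    iidMatrixLaw m n μ {A | ¬ Surjective ((Matrix.of A).map f).mulVec} ≤
      (Nat.card K : ℝ≥0∞) ^ Fintype.card m * ((Nat.card K : ℝ≥0∞) ^ Fintype.card n)⁻¹ := by
  classical
  have := Fintype.ofFinite K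
  set c := ((Nat.card K : ℝ≥0∞) ^ Fintype.card n)⁻¹
  calc iidMatrixLaw m n μ {A | ¬ Surjective ((Matrix.of A).map f).mulVec}
    _ ≤ iidMatrixLaw m n μ
          (⋃ w ∈ Finset.univ.erase (0 : m → K), {A | w ᵥ* (Matrix.of A).map f = 0}) := by
        refine measure_mono fun A hA => ?_
        simpa using exists_ne_zero_vecMul_eq_zero hA
    _ ≤ ∑ w ∈ Finset.univ.erase (0 : m → K),
          iidMatrixLaw m n μ {A | w ᵥ* (Matrix.of A).map f = 0} := measure_biUnion_finset_le _ _
    _ = ∑ _w ∈ Finset.univ.erase (0 : m → K), c := Finset.sum_congr rfl fun _ hw =>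
        iidMatrixLaw_vecMul_map_eq_zero f μ hf hker (Finset.ne_of_mem_erase hw)
    _ ≤ ∑ _w : m → K, c := Finset.sum_le_sum_of_subset (Finset.erase_subset _ _)
    _ = (Nat.card K : ℝ≥0∞) ^ Fintype.card m * c := by simp

end RandomMatrix

section LocalRing

variable {ι : Type*} {R : ι → Type*} [∀ i, CommRing (R i)] [∀ i, IsLocalRing (R i)]

theorem mulVec_surjective_iff_residue {m n : Type*} [Finite m] [Fintype n]
    {A : Matrix m n (∀ i, R i)} :
    Surjective A.mulVec ↔
      ∀ i, Surjective (A.map ((residue (R i)).comp (Pi.evalRingHom R i))).mulVec := by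
  rw [mulVec_surjective_pi_iff]
  exact forall_congr' fun i => (mulVec_surjective_map_iff (residue (R i)) residue_surjective).symm

theorem iidMatrixLaw_not_surjective_le [Countable ι] [∀ i, Finite (ResidueField (R i))]
    [∀ i, MeasurableSpace (R i)] [∀ i, MeasurableAdd (R i)]
    (hR : ∀ i, MeasurableSet (maximalIdeal (R i) : Set (R i)))
    (μ : Measure (∀ i, R i)) [IsProbabilityMeasure μ] [μ.IsAddLeftInvariant] (n k : ℕ) :
    iidMatrixLaw (Fin n) (Fin (n + k)) μ {A | ¬ Surjective (Matrix.of A).mulVec} ≤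
      ∑' i, ((Nat.card (ResidueField (R i)) : ℝ≥0∞)⁻¹) ^ k := by
  let f (i : ι) : (∀ i, R i) →+* ResidueField (R i) := (residue (R i)).comp (Pi.evalRingHom R i)
  have hf (i : ι) : Surjective (f i) := residue_surjective.comp (surjective_eval i)
  have hker (i : ι) : MeasurableSet (RingHom.ker (f i) : Set (∀ i, R i)) := by
    convert measurable_pi_apply i (hR i) using 1
    ext x
    simp [f]
  simp only [mulVec_surjective_iff_residue, not_forall, Set.ofPred_exists]
  refine (measure_iUnion_le _).trans (ENNReal.tsum_le_tsum fun i => ?_)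
  refine (iidMatrixLaw_not_surjective_map_le (f i) μ (hf i) (hker i)).trans_eq ?_
  have hq : (Nat.card (ResidueField (R i)) : ℝ≥0∞) ^ n ≠ 0 :=
    pow_ne_zero n (Nat.cast_ne_zero.2 Nat.card_pos.ne')
  rw [Fintype.card_fin, Fintype.card_fin, pow_add, ENNReal.mul_inv (by simp) (by simp),
    ← mul_assoc, ENNReal.mul_inv_cancel hq (by finiteness), one_mul, ENNReal.inv_pow]

end LocalRing

theorem tendsto_tsum_pow_atTop_zero {ι : Type*} {x : ι → ℝ≥0∞} (hx : ∀ i, x i < 1) {N : ℕ}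
    (hN : ∑' i, x i ^ N ≠ ∞) : Tendsto (fun k => ∑' i, x i ^ k) atTop (𝓝 0) := by
  let _ : MeasurableSpace ι := ⊤
  simp only [← lintegral_count] at hN ⊢
  rw [← lintegral_zero]
  refine tendsto_lintegral_filter_of_dominated_convergence (fun i => x i ^ N)
    (.of_forall fun _ => measurable_from_top) ?_ hN
    (.of_forall fun i => ENNReal.tendsto_pow_atTop_nhds_zero_of_lt_one (hx i))
  filter_upwards [eventually_ge_atTop N] with k hk
  exact .of_forall fun i => pow_le_pow_right_of_le_one' (hx i).le hk

theorem tendsto_measure_one_of_tendsto_measure_compl_zero {α : Type*} {Ω : α → Type*}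
    [∀ a, MeasurableSpace (Ω a)] {ν : ∀ a, Measure (Ω a)} [∀ a, IsProbabilityMeasure (ν a)]
    {s : ∀ a, Set (Ω a)} {l : Filter α} (h : Tendsto (fun a => ν a (s a)ᶜ) l (𝓝 0)) :
    Tendsto (fun a => ν a (s a)) l (𝓝 1) := by
  -- The sets need not be measurable, so only subadditivity relates `s a` to its complement.
  have hlower : Tendsto (fun a => 1 - ν a (s a)ᶜ) l (𝓝 1) := by
    simpa using ENNReal.Tendsto.sub tendsto_const_nhds h (.inl ENNReal.one_ne_top)
  refine tendsto_of_tendsto_of_tendsto_of_le_of_le hlower tendsto_const_nhds (fun a => ?_)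
    fun a => prob_le_one
  rw [tsub_le_iff_right, ← measure_univ (μ := ν a)]
  exact measure_univ_le_add_compl _

theorem stmt5_general {ι : Type*} {R : ι → Type*} [∀ i, CommRing (R i)] [∀ i, IsLocalRing (R i)]
    [∀ i, Finite (ResidueField (R i))] [∀ i, MeasurableSpace (R i)] [∀ i, MeasurableAdd (R i)]
    (hR : ∀ i, MeasurableSet (maximalIdeal (R i) : Set (R i))) {N : ℕ}
    (hN : ∑' i, ((Nat.card (ResidueField (R i)) : ℝ≥0∞)⁻¹) ^ N ≠ ∞)
    (u : ℕ → ℕ) (hu : Tendsto u atTop atTop)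
    (μ : Measure (∀ i, R i)) [IsProbabilityMeasure μ] [μ.IsAddLeftInvariant] :
    Tendsto (fun n : ℕ =>
        ((Measure.pi fun _ : Fin n => Measure.pi fun _ : Fin (n + u n) => μ)
          {A | Surjective (Matrix.of A).mulVecLin}).toReal) atTop
      (𝓝 1) := by
  have : Countable ι := by
    have hsupp := Summable.countable_support_ennreal hN
    rwa [support_eq_univ (by simp), Set.countable_univ_iff] at hsupp
  have hcard (i : ι) : (Nat.card (ResidueField (R i)) : ℝ≥0∞)⁻¹ < 1 := by
    simpa using Finite.one_lt_card
  rw [← ENNReal.toReal_one]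
  refine (ENNReal.tendsto_toReal ENNReal.one_ne_top).comp
    (tendsto_measure_one_of_tendsto_measure_compl_zero ?_)
  exact tendsto_of_tendsto_of_tendsto_of_le_of_le tendsto_const_nhds
    ((tendsto_tsum_pow_atTop_zero hcard hN).comp hu) (fun _ => zero_le)
    fun n => iidMatrixLaw_not_surjective_le hR μ n (u n)

section Padic

theorem measurableSet_maximalIdeal_padicInt (p : ℕ) [Fact p.Prime] :
    MeasurableSet (maximalIdeal ℤ_[p] : Set ℤ_[p]) := by
  have hball : (maximalIdeal ℤ_[p] : Set ℤ_[p]) = {x | ‖x‖ < 1} :=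
    Set.ext fun _ => (mem_maximalIdeal _).trans PadicInt.mem_nonunits
  exact hball ▸ measurableSet_lt measurable_norm measurable_const

theorem card_residueField_padicInt (p : ℕ) [Fact p.Prime] : Nat.card (ResidueField ℤ_[p]) = p :=
  (Nat.card_congr PadicInt.residueField.toEquiv).trans (Nat.card_zmod p)

theorem tsum_primes_inv_pow_ne_top {k : ℕ} (hk : 1 < k) :
    ∑' p : Nat.Primes, ((p : ℝ≥0∞)⁻¹) ^ k ≠ ∞ := by
  have hsum : Summable fun p : Nat.Primes => ((p : ℝ) ^ k)⁻¹ :=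
    (Real.summable_nat_pow_inv.2 hk).comp_injective Nat.Primes.coe_nat_injective
  convert hsum.tsum_ofReal_ne_top using 4 with p
  have hp : 0 < (p : ℝ) := Nat.cast_pos.2 p.2.pos
  rw [ENNReal.ofReal_inv_of_pos (pow_pos hp k), ENNReal.ofReal_pow hp.le, ENNReal.ofReal_natCast,
    ENNReal.inv_pow]

end Padic

theorem stmt5 (u : ℕ → ℕ) (hu : Tendsto u atTop atTop)
    (μ : Measure Zhat) [IsProbabilityMeasure μ] [μ.IsAddHaarMeasure] :
    Tendsto (fun n : ℕ =>
        ((Measure.pi fun _ : Fin n => Measure.pi fun _ : Fin (n + u n) => μ)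
          {A | Function.Surjective (Matrix.of A).mulVecLin}).toReal) atTop
      (nhds 1) := by
  refine stmt5_general (R := fun p : Nat.Primes => ℤ_[p]) (N := 2)
    (fun p => measurableSet_maximalIdeal_padicInt p) ?_ u hu μ
  simpa only [card_residueField_padicInt] using tsum_primes_inv_pow_ne_top one_lt_two
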